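/- Let (σ_k) and (γ_k) be two sequences of Radon measures on X^d, and assume there exist two nonzero Radon measures σ and γ on X^d, an integer n̲ ≥ 1 and a real number θ > 0 such that: σ_k → σ, γ_k → γ, γ_k ≤ σ_k for all k, and for every n ≥ n̲ one has γ_k(C_n^d) ≥ θ σ_k(C_n^d) for all large enough k (depending on n). Then γ is absolutely continuous with respect to σ. -/

import Mathlib

/-!
A box of tower `n` is a finite disjoint union of boxes of any later tower. So the sets determined
by the indices at one single stage form an algebra (`isSetAlgebra_cyls`) generating the
`σ`-algebra of `X^d` (`pi_eq_generateFrom_cyls`), and those inside a tower product are finite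
unions of boxes (`measure_cyl_eq_sum`), to which the convergence of ratios extends
(`tendsto_cyl_div`), even with the normalization taken in a fixed earlier `C_n^d`
(`tendsto_cyl_div_of_le`).

Fix `n` with `σ (C_n^d)` and `γ (C_n^d)` positive. For a cylinder `A ⊆ C_n^d`, dividing
`γ_k A ≤ σ_k A` by `γ_k (C_n^d) ≥ θ σ_k (C_n^d)` and passing to the limit gives
`γ A / γ (C_n^d) ≤ θ⁻¹ (σ A / σ (C_n^d))`, i.e. `γ A ≤ K σ A` where `K` depends on `n` but not on
the stage at which `A` is described. Approximating a `σ`-null set by cylinders for the finite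
measure `(γ + σ)|_{C_n^d}` shows that it is `γ`-null inside `C_n^d`
(`measure_inter_eq_zero_of_cyl_le`); the sets `C_n^d` increase to `X^d`.
-/


open MeasureTheory Set Filter Topology
open scoped ENNReal
open scoped Classical

noncomputable section

/-! ## The nearly finite Chacon transformation: symbolic model -/

/-- The alphabet `{*} ∪ ℕ` is modelled by `Option ℕ`, `none` playing the role of `*`. -/
instance optionNatTop : TopologicalSpace (Option ℕ) := ⊥

/-- The data of the two sequences `(n_ℓ)` and `(ℓ_k)` used in the construction of the
nearly finite Chacon transformation, together with the growth conditions imposed on them. -/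
structure NFCseq where
  nseq : ℕ → ℕ
  lseq : ℕ → ℕ
  nseq_zero : nseq 0 = 0
  lseq_zero : lseq 0 = 1
  lseq_strictMono : StrictMono lseq
  nseq_growth : ∀ ℓ : ℕ, 1 ≤ ℓ → nseq (ℓ - 1) + 2 * ℓ < nseq ℓ
  lseq_growth : ∀ k : ℕ, (2 : ℝ) ≤ (1 + ((7 : ℝ) ^ k)⁻¹) ^ (lseq (k + 1) - lseq k)

namespace NFCseq

/-- `k(ℓ)`: the unique `k` with `ℓ_k ≤ ℓ < ℓ_{k+1}`. -/
def kOf (P : NFCseq) (ℓ : ℕ) : ℕ := sSup {k | P.lseq k ≤ ℓ}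

/-- The heights `h_n` of the towers. -/
def hgt (P : NFCseq) : ℕ → ℕ
  | 0 => 1
  | n + 1 =>
    3 * P.hgt n +
      3 * (if hn : ∃ ℓ, 1 ≤ ℓ ∧ P.nseq ℓ = n then P.hgt (n - P.kOf (Nat.find hn)) else 0) + 1
termination_by n => n
decreasing_by all_goals omega

theorem hgt_pos (P : NFCseq) (n : ℕ) : 0 < P.hgt n := by
  cases n with
  | zero => simp [hgt]
  | succ n => rw [hgt]; omega

/-- The number of spacers put above the first subcolumn at step `n+1`
(`h_{n-k(ℓ)}` if `n = n_ℓ`, and `0` otherwise). -/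
def spa (P : NFCseq) (n : ℕ) : ℕ :=
  if hn : ∃ ℓ, 1 ≤ ℓ ∧ P.nseq ℓ = n then P.hgt (n - P.kOf (Nat.find hn)) else 0

/-- The map `p_n` sending the index of a level of tower `n+1` to the index of the level of
tower `n` containing it (`none` if that level lies outside tower `n`). -/
def pmap (P : NFCseq) (n j : ℕ) : Option ℕ :=
  if j < P.hgt n then some j
  else if j < P.hgt n + P.spa n then none
  else if j < 2 * P.hgt n + P.spa n then some (j - (P.hgt n + P.spa n))
  else if j < 2 * P.hgt n + 2 * P.spa n + 1 then none
  else if j < 3 * P.hgt n + 2 * P.spa n + 1 then some (j - (2 * P.hgt n + 2 * P.spa n + 1))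
  else none

/-- The defining property of points of the space `X`. -/
def Xspec (P : NFCseq) (x : ℕ → Option ℕ) : Prop :=
  (∀ n, x n = (x (n + 1)).bind (P.pmap n)) ∧ ∃ n, x n ≠ none

/-- The space `X` of the symbolic model, with its product (subspace) topology. -/
abbrev Xpt (P : NFCseq) : Type := {x : ℕ → Option ℕ // P.Xspec x}

instance (P : NFCseq) : MeasurableSpace P.Xpt := borel _

/-- `L_n^j`, the `j`-th level of tower `n`. -/
def level (P : NFCseq) (n j : ℕ) : Set P.Xpt := {x | x.1 n = some j}

/-- `C_n`, the union of all levels of tower `n`. -/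
def tower (P : NFCseq) (n : ℕ) : Set P.Xpt := {x | x.1 n ≠ none}

theorem pmap_zero (P : NFCseq) (n : ℕ) : P.pmap n 0 = some 0 := by
  unfold pmap
  simp [P.hgt_pos n]

/-- The point `𝟎 = (0,0,…)`. -/
def zeroPt (P : NFCseq) : P.Xpt :=
  ⟨fun _ => some 0, fun n => by
    show some 0 = (some 0).bind (P.pmap n)
    simp [P.pmap_zero n], 0, by simp⟩

/-- `t_n(x) ∈ {1,2,3}`: the subcolumn of tower `n` to which `x` belongs
(junk value `0` if `x` is not in tower `n+1`). -/
def tcol (P : NFCseq) (n : ℕ) (x : P.Xpt) : ℕ :=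
  match x.1 (n + 1) with
  | none => 0
  | some j =>
    if j < P.hgt n + P.spa n then 1
    else if j < 2 * P.hgt n + 2 * P.spa n + 1 then 2
    else 3

/-- The index (from `0` to `3^(m-n) - 1`, ordered from bottom to top of tower `m`) of the
occurrence of tower `n` inside tower `m` to which `x` belongs. -/
def occIdx (P : NFCseq) (n m : ℕ) (x : P.Xpt) : ℕ :=
  ∑ r ∈ Finset.Ico n m, (P.tcol r x - 1) * 3 ^ (r - n)

/-- `x` belongs to one of the first hundred occurrences of tower `n` inside tower `m`. -/
def inFirstHundred (P : NFCseq) (n m : ℕ) (x : P.Xpt) : Prop := P.occIdx n m x < 100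

/-- `x` belongs to one of the last hundred occurrences of tower `n` inside tower `m`. -/
def inLastHundred (P : NFCseq) (n m : ℕ) (x : P.Xpt) : Prop :=
  3 ^ (m - n) ≤ P.occIdx n m x + 100

end NFCseq

/-- The nearly finite Chacon transformation `T` together with its invariant measure `μ`. -/
structure NFC extends NFCseq where
  T : toNFCseq.Xpt → toNFCseq.Xpt
  μ : Measure toNFCseq.Xpt
  T_inj : Function.Injective T
  T_range : Set.range T = {toNFCseq.zeroPt}ᶜ
  T_up : ∀ x : toNFCseq.Xpt, ∃ N : ℕ, ∀ n, N ≤ n →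
    ∃ j : ℕ, x.1 n = some j ∧ (T x).1 n = some (j + 1)
  T_meas : Measurable T
  μ_level : ∀ n j : ℕ, j < toNFCseq.hgt n →
    μ (toNFCseq.level n j) = (3 : ℝ≥0∞)⁻¹ ^ n
  μ_pres : MeasurePreserving T μ μ
  μ_sfin : SigmaFinite μ

namespace NFC

/-- `X^d`. -/
abbrev Xd (S : NFC) (d : ℕ) : Type := Fin d → S.toNFCseq.Xpt

/-- The Cartesian power `T^{×d}`. -/
def Td (S : NFC) (d : ℕ) : S.Xd d → S.Xd d := fun y i => S.T (y i)

/-- `C_n^d`. -/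
def towerD (S : NFC) (d n : ℕ) : Set (S.Xd d) := {y | ∀ i, y i ∈ S.toNFCseq.tower n}

/-- `B` is an `n`-box. -/
def IsNBox (S : NFC) (d n : ℕ) (B : Set (S.Xd d)) : Prop :=
  ∃ v : Fin d → ℕ, (∀ i, v i < S.toNFCseq.hgt n) ∧
    B = {y : S.Xd d | ∀ i, y i ∈ S.toNFCseq.level n (v i)}

/-- A measure on `X^d` is Radon iff it is finite on each `C_n^d`. -/
def IsRadon (S : NFC) (d : ℕ) (σ : Measure (S.Xd d)) : Prop :=
  ∀ n, σ (S.towerD d n) < ⊤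

/-- `σ` is `T^{×d}`-invariant. -/
def InvariantD (S : NFC) (d : ℕ) (σ : Measure (S.Xd d)) : Prop :=
  ∀ A : Set (S.Xd d), MeasurableSet A → σ ((S.Td d) ⁻¹' A) = σ A

/-- `T^{-e} A`, the preimage of `A` under `T^e` for `e ∈ ℤ` (image for negative `e`). -/
def preT (S : NFC) : ℤ → Set S.toNFCseq.Xpt → Set S.toNFCseq.Xpt
  | Int.ofNat k, A => S.T^[k] ⁻¹' A
  | Int.negSucc k, A => S.T^[k + 1] '' A

/-- `σ` is a graph measure arising from powers of `T` on `X^ι`: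
`σ(∏ᵢ Aᵢ) = α · μ(⋂ᵢ T^{-eᵢ} Aᵢ)`. -/
def IsGraphMeasure (S : NFC) {ι : Type} (σ : Measure (ι → S.toNFCseq.Xpt)) : Prop :=
  ∃ α : ℝ≥0∞, 0 < α ∧ α ≠ ⊤ ∧ ∃ e : ι → ℤ,
    ∀ A : ι → Set S.toNFCseq.Xpt, (∀ i, MeasurableSet (A i)) →
      σ (Set.univ.pi A) = α * S.μ (⋂ i, S.preT (e i) (A i))

/-- `σ = σ^{D_1} ⊗ ⋯ ⊗ σ^{D_r}` for a partition `D_1, …, D_r` of `{1,…,d}` where each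
`σ^{D_j}` is a graph measure on `X^{D_j}` arising from powers of `T`. -/
def IsProductOfGraphMeasures (S : NFC) (d : ℕ) (σ : Measure (S.Xd d)) : Prop :=
  ∃ (r : ℕ) (D : Fin r → Finset (Fin d)),
    (∀ j, (D j).Nonempty) ∧
    (∀ j j', j ≠ j' → Disjoint (D j) (D j')) ∧
    (∀ i : Fin d, ∃ j, i ∈ D j) ∧
    ∃ σD : ∀ j : Fin r, Measure ({i // i ∈ D j} → S.toNFCseq.Xpt),
      (∀ j, S.IsGraphMeasure (σD j)) ∧
      ∀ A : Fin d → Set S.toNFCseq.Xpt, (∀ i, MeasurableSet (A i)) →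
        σ (Set.univ.pi A) =
          ∏ j : Fin r, σD j (Set.univ.pi fun i : {i // i ∈ D j} => A i.1)

end NFC


/-- `(T)^j W` for `j ∈ ℤ`: forward images for `j ≥ 0`, preimages for `j < 0`. -/
def iterZ {α : Type*} (f : α → α) : ℤ → Set α → Set α
  | Int.ofNat k, A => f^[k] '' A
  | Int.negSucc k, A => f^[k + 1] ⁻¹' A

namespace NFC

/-- `σ` is totally dissipative: there is a wandering set `W` whose `ℤ`-orbit covers
`X^d` up to a `σ`-null set. -/
def TotallyDissipative (S : NFC) (d : ℕ) (σ : Measure (S.Xd d)) : Prop :=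
  ∃ W : Set (S.Xd d), MeasurableSet W ∧
    (∀ j j' : ℤ, j ≠ j' → Disjoint (iterZ (S.Td d) j W) (iterZ (S.Td d) j' W)) ∧
    σ (⋃ j : ℤ, iterZ (S.Td d) j W)ᶜ = 0

/-- The ring `𝓡` of finite unions of `n`-boxes. -/
def BoxRing (S : NFC) (d : ℕ) : Set (Set (S.Xd d)) :=
  {B | ∃ n : ℕ, ∃ 𝔅 : Finset (Set (S.Xd d)), (∀ b ∈ 𝔅, S.IsNBox d n b) ∧ B = ⋃₀ ↑𝔅}

/-- Convergence of a sequence of Radon measures on `X^d`. -/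
def RTendsto (S : NFC) (d : ℕ) (σk : ℕ → Measure (S.Xd d)) (σ : Measure (S.Xd d)) : Prop :=
  ∀ n : ℕ, 0 < σ (S.towerD d n) →
    (∀ᶠ k in atTop, 0 < σk k (S.towerD d n)) ∧
    ∀ B : Set (S.Xd d), S.IsNBox d n B →
      Tendsto (fun k => σk k B / σk k (S.towerD d n)) atTop
        (𝓝 (σ B / σ (S.towerD d n)))

/-- The edge `∂C_n^d` of `C_n^d`. -/
def edgeD (S : NFC) (d n : ℕ) : Set (S.Xd d) :=
  {y | y ∈ S.towerD d n ∧ ∃ i, y i ∈ S.toNFCseq.level n 0 ∨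
    y i ∈ S.toNFCseq.level n (S.toNFCseq.hgt n - 1)}

/-- `Ω_m`: the union of all `m`-boxes `L_m^{j_1} × ⋯ × L_m^{j_d}` with `j_i ≠ 0` for all `i`. -/
def OmegaD (S : NFC) (d m : ℕ) : Set (S.Xd d) :=
  {y | ∀ i, ∃ j : ℕ, j ≠ 0 ∧ j < S.toNFCseq.hgt m ∧ y i ∈ S.toNFCseq.level m j}

/-- A twisting transformation on `X^d`: it applies `T` to the coordinates in a nonempty
proper subset `G_1 ⊆ {1,…,d}` and the identity to the others. -/
def IsTwist (S : NFC) (d : ℕ) (Sw : S.Xd d → S.Xd d) : Prop :=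
  ∃ G : Fin d → Bool, (∃ i, G i = true) ∧ (∃ i, G i = false) ∧
    ∀ (y : S.Xd d) (i : Fin d), Sw y i = if G i then S.T (y i) else y i

/-- The empirical measure `γ_J = ∑_{j ∈ J} δ_{(T^{×d})^j x}` along a two-sided orbit `o`. -/
def emp (S : NFC) (d : ℕ) (o : ℤ → S.Xd d) (J : Finset ℤ) : Measure (S.Xd d) :=
  ∑ j ∈ J, Measure.dirac (o j)

end NFC

/-- `J` is a (nonempty finite) interval of `ℤ`. -/
def IsIntervalZ (J : Finset ℤ) : Prop := ∃ a b : ℤ, a ≤ b ∧ J = Finset.Icc a b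

namespace NFC

/-- `J` is an `n`-crossing for the orbit `o` of a point of `X^d`: a maximal interval on which
the orbit stays in `C_n^d` with all the `t_n(T^j x_i)` constant. -/
def IsCrossing (S : NFC) (d : ℕ) (o : ℤ → S.Xd d) (n : ℕ) (J : Finset ℤ) : Prop :=
  IsIntervalZ J ∧
  (∀ j ∈ J, o j ∈ S.towerD d n) ∧
  (∀ i : Fin d, ∀ j ∈ J, ∀ j' ∈ J, S.toNFCseq.tcol n (o j i) = S.toNFCseq.tcol n (o j' i)) ∧
  ∀ J' : Finset ℤ, J ⊆ J' → IsIntervalZ J' →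
    (∀ j ∈ J', o j ∈ S.towerD d n) →
    (∀ i : Fin d, ∀ j ∈ J', ∀ j' ∈ J', S.toNFCseq.tcol n (o j i) = S.toNFCseq.tcol n (o j' i)) →
    J' = J

/-- An `n`-crossing is synchronized if `t_n(T^j x_1) = ⋯ = t_n(T^j x_d)` on it. -/
def IsSync (S : NFC) (d : ℕ) (o : ℤ → S.Xd d) (n : ℕ) (J : Finset ℤ) : Prop :=
  ∀ j ∈ J, ∀ i i' : Fin d, S.toNFCseq.tcol n (o j i) = S.toNFCseq.tcol n (o j i')

end NFC

/-- The interval `I_n` of length `h_n` centered at `0`. -/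
def Imid (P : NFCseq) (n : ℕ) : Finset ℤ :=
  Finset.Icc (-((P.hgt n / 2 : ℕ) : ℤ)) (-((P.hgt n / 2 : ℕ) : ℤ) + P.hgt n - 1)

namespace NFC

/-- A substantial `n`-crossing: an `n`-crossing whose intersection with `I_n` has at least
`η·h_n` elements. -/
def IsSubstantial (S : NFC) (d : ℕ) (o : ℤ → S.Xd d) (η : ℝ) (n : ℕ) (J : Finset ℤ) : Prop :=
  S.IsCrossing d o n J ∧ η * S.toNFCseq.hgt n ≤ ((J ∩ Imid S.toNFCseq n).card : ℝ)

/-- `x_i` climbs into tower `n` along the interval `I`. -/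
def Climbs (S : NFC) (d : ℕ) (o : ℤ → S.Xd d) (i : Fin d) (n : ℕ) (I : Finset ℤ) : Prop :=
  (∀ j ∈ I, (o j) i ∈ S.toNFCseq.tower n) ∧
  ¬ ∃ j : ℤ, j ∈ I ∧ j + 1 ∈ I ∧
      (o j) i ∈ S.toNFCseq.level n (S.toNFCseq.hgt n - 1) ∧
      (o (j + 1)) i ∈ S.toNFCseq.level n 0

end NFC

/-- The nearly finite Chacon system together with the conull set `X_∞` and the function
`x ↦ ℓ(x)` of Lemma 2.3. -/
structure NFCX extends NFC where
  Xinf : Set toNFCseq.Xpt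
  ellx : toNFCseq.Xpt → ℕ
  Xinf_conull : μ Xinfᶜ = 0
  Xinf_spec : ∀ x ∈ Xinf, ∀ ℓ : ℕ, ellx x ≤ ℓ → ∀ n : ℕ,
    nseq (ℓ - 1) ≤ n → n + ℓ ≤ nseq ℓ →
      x ∈ toNFCseq.tower n ∧ ¬ toNFCseq.inFirstHundred n (nseq ℓ) x ∧
        ¬ toNFCseq.inLastHundred n (nseq ℓ) x

namespace NFCX

/-- `o` is the two-sided orbit of a `σ`-typical point `x = o 0` (satisfying
conditions (1), (2) and (3) of Section 3.4 of the paper). -/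
def IsTypicalOrbit (S : NFCX) (d : ℕ) (σ : Measure (S.toNFC.Xd d))
    (o : ℤ → S.toNFC.Xd d) : Prop :=
  (∀ j : ℤ, S.toNFC.Td d (o j) = o (j + 1)) ∧
  (∀ j : ℤ, ∀ n : ℕ, 0 < σ (S.toNFC.towerD d n) →
    ∀ B : Set (S.toNFC.Xd d), S.toNFC.IsNBox d n B →
    ∀ a b : ℕ → ℤ, (∀ k, a k ≤ 0) → (∀ k, 0 ≤ b k) →
      Tendsto (fun k => b k - a k) atTop atTop →
      Tendsto (fun k =>
          (((Finset.Icc (a k) (b k)).filter (fun j' => o (j + j') ∈ B)).card : ℝ) /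
            (((Finset.Icc (a k) (b k)).filter
              (fun j' => o (j + j') ∈ S.toNFC.towerD d n)).card : ℝ))
        atTop (𝓝 ((σ B).toReal / (σ (S.toNFC.towerD d n)).toReal))) ∧
  (∀ n : ℕ, ∀ B : Set (S.toNFC.Xd d), S.toNFC.IsNBox d n B → o 0 ∈ B → 0 < σ B) ∧
  (∀ i : Fin d, (o 0) i ∈ S.Xinf)

end NFCX

/-! ## Subsets of `ℤ` of order `ℓ` inside an interval -/

/-- A piece of `F ∩ I`: a maximal interval included in `F ∩ I`. -/
def IsPieceZ (F : Set ℤ) (I : Finset ℤ) (J : Finset ℤ) : Prop :=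
  IsIntervalZ J ∧ (↑J : Set ℤ) ⊆ F ∩ ↑I ∧
    ∀ J' : Finset ℤ, IsIntervalZ J' → (↑J' : Set ℤ) ⊆ F ∩ ↑I → J ⊆ J' → J' = J

/-- A hole of `F ∩ I`: a maximal interval included in `I \ F`. -/
def IsHoleZ (F : Set ℤ) (I : Finset ℤ) (J : Finset ℤ) : Prop :=
  IsIntervalZ J ∧ (↑J : Set ℤ) ⊆ (↑I : Set ℤ) \ F ∧
    ∀ J' : Finset ℤ, IsIntervalZ J' → (↑J' : Set ℤ) ⊆ (↑I : Set ℤ) \ F → J ⊆ J' → J' = J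

/-- Each hole of `F ∩ I` has size at most `s`. -/
def HolesSmall (F : Set ℤ) (I : Finset ℤ) (s : ℕ) : Prop :=
  ∀ H : Finset ℤ, IsHoleZ F I H → H.card ≤ s

/-- Two consecutive holes of `F ∩ I` are always separated by a piece of size at least `c`. -/
def HolesSeparated (F : Set ℤ) (I : Finset ℤ) (c : ℕ) : Prop :=
  ∀ H₁ H₂ : Finset ℤ, IsHoleZ F I H₁ → IsHoleZ F I H₂ →
    (∀ a ∈ H₁, ∀ b ∈ H₂, a < b) →
    ∃ J : Finset ℤ, IsPieceZ F I J ∧ c ≤ J.card ∧ ∀ a ∈ H₁, ∀ b ∈ H₂, ∀ x ∈ J, a < x ∧ x < b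

/-- `F` is of order `ℓ ≥ 1` inside the interval `I`, with respect to the sequences `c`, `s`. -/
def IsOrder (c s : ℕ → ℕ) : ℕ → Set ℤ → Finset ℤ → Prop
  | 0, _, _ => False
  | 1, F, I => HolesSmall F I (s 1) ∧ HolesSeparated F I (c 1)
  | (ℓ + 2), F, I => ∃ F' : Set ℤ, F ⊆ F' ∧ HolesSmall F' I (s (ℓ + 2)) ∧
      HolesSeparated F' I (c (ℓ + 2)) ∧
      ∀ J : Finset ℤ, IsPieceZ F' I J → IsOrder c s (ℓ + 1) F J

/-- `p_1`: the smallest integer such that `3^{p_1} > 2d+1` and `p_1 > d`. -/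
def pOne (d : ℕ) : ℕ := sInf {p : ℕ | 2 * d + 1 < 3 ^ p ∧ d < p}

/-- `p_2`: the smallest integer such that `1/3^{p_2} < η/3`. -/
def pTwo (η : ℝ) : ℕ := sInf {p : ℕ | ((3 : ℝ) ^ p)⁻¹ < η / 3}


/-! ### Cylinders and boxes -/

namespace NFC

variable (S : NFC) (d : ℕ)

/-- The cylinder of points of `X^d` whose vector of indices in tower `n` belongs to `s`. -/
def cyl (n : ℕ) (s : Set (Fin d → Option ℕ)) : Set (S.Xd d) := {y | (fun i => (y i).1 n) ∈ s}

/-- The collection of all cylinders, over all stages. -/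
def cyls : Set (Set (S.Xd d)) := {A | ∃ n s, A = S.cyl d n s}

/-- The index at stage `n` is a function of the index at any later stage `m`. -/
lemma exists_proj {n m : ℕ} (h : n ≤ m) :
    ∃ f : Option ℕ → Option ℕ, f none = none ∧ ∀ x : S.toNFCseq.Xpt, x.1 n = f (x.1 m) := by
  induction m, h using Nat.le_induction with
  | base => exact ⟨id, rfl, fun x => rfl⟩
  | succ m _ ih =>
    obtain ⟨f, hf0, hf⟩ := ih
    refine ⟨fun o => f (o.bind (S.toNFCseq.pmap m)), by simpa using hf0, fun x => ?_⟩
    rw [hf x, x.2.1 m]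

lemma cyl_lift {n m : ℕ} (h : n ≤ m) (s : Set (Fin d → Option ℕ)) :
    ∃ t, S.cyl d n s = S.cyl d m t := by
  obtain ⟨f, -, hf⟩ := S.exists_proj h
  refine ⟨{v | (fun i => f (v i)) ∈ s}, ?_⟩
  ext y
  simp only [cyl, mem_ofPred_eq, hf]

lemma towerD_mono {n m : ℕ} (h : n ≤ m) : S.towerD d n ⊆ S.towerD d m := by
  obtain ⟨f, hf0, hf⟩ := S.exists_proj h
  intro y hy i hi
  exact hy i (by rw [hf, hi, hf0])

lemma iUnion_towerD : ⋃ n, S.towerD d n = univ := by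
  refine eq_univ_of_forall fun y => mem_iUnion.2 ?_
  choose N hN using fun i => (y i).2.2
  refine ⟨Finset.univ.sup N, fun i hi => hN i ?_⟩
  obtain ⟨f, hf0, hf⟩ := S.exists_proj (Finset.le_sup (f := N) (Finset.mem_univ i))
  rw [hf, hi, hf0]

lemma towerD_eq_cyl (n : ℕ) : S.towerD d n = S.cyl d n {v | ∀ i, v i ≠ none} := rfl

/-- Indices of levels are smaller than the height of the tower. -/
lemma lt_hgt {n j : ℕ} {x : S.toNFCseq.Xpt} (h : x.1 n = some j) : j < S.toNFCseq.hgt n := by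
  rw [x.2.1 n, Option.bind_eq_some_iff] at h
  obtain ⟨a, -, ha⟩ := h
  unfold NFCseq.pmap at ha
  split_ifs at ha <;> simp only [Option.some.injEq] at ha <;> omega

lemma measurable_coord [MeasurableSpace (Option ℕ)] [DiscreteMeasurableSpace (Option ℕ)] (n : ℕ) :
    Measurable fun x : S.toNFCseq.Xpt => x.1 n := by
  have : DiscreteTopology (Option ℕ) := ⟨rfl⟩
  have : BorelSpace S.toNFCseq.Xpt := ⟨rfl⟩
  have : BorelSpace (Option ℕ) := inferInstance
  exact ((continuous_apply n).comp continuous_subtype_val).measurable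

lemma measurableSet_cyl (n : ℕ) (s : Set (Fin d → Option ℕ)) : MeasurableSet (S.cyl d n s) := by
  let : MeasurableSpace (Option ℕ) := ⊤
  have : DiscreteMeasurableSpace (Option ℕ) := ⟨fun _ => trivial⟩
  have h : Measurable fun (y : S.Xd d) (i : Fin d) => (y i).1 n :=
    measurable_pi_lambda _ fun i => (S.measurable_coord n).comp (measurable_pi_apply i)
  exact h s.to_countable.measurableSet

lemma isSetAlgebra_cyls : IsSetAlgebra (S.cyls d) where
  empty_mem := ⟨0, ∅, rfl⟩
  compl_mem := by
    rintro _ ⟨n, s, rfl⟩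
    exact ⟨n, sᶜ, rfl⟩
  union_mem := by
    rintro _ _ ⟨n, s, rfl⟩ ⟨m, t, rfl⟩
    obtain ⟨s', hs⟩ := S.cyl_lift d (le_max_left n m) s
    obtain ⟨t', ht⟩ := S.cyl_lift d (le_max_right n m) t
    exact ⟨max n m, s' ∪ t', by rw [hs, ht]; rfl⟩

lemma pi_eq_generateFrom_cyls :
    (MeasurableSpace.pi : MeasurableSpace (S.Xd d)) = MeasurableSpace.generateFrom (S.cyls d) := by
  apply le_antisymm
  · let : MeasurableSpace (Option ℕ) := ⊤
    have : DiscreteMeasurableSpace (Option ℕ) := ⟨fun _ => trivial⟩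
    have : DiscreteTopology (Option ℕ) := ⟨rfl⟩
    have : BorelSpace (Option ℕ) := inferInstance
    -- the Borel structure of `X` is the one induced by the product of the discrete alphabets
    have hX : (borel S.toNFCseq.Xpt) =
        MeasurableSpace.comap Subtype.val (MeasurableSpace.pi : MeasurableSpace (ℕ → Option ℕ)) := by
      rw [BorelSpace.measurable_eq (α := ℕ → Option ℕ), borel_comap]
    refine iSup_le fun i => ?_
    change MeasurableSpace.comap (fun b : S.Xd d => b i) (borel S.toNFCseq.Xpt) ≤ _
    rw [hX, MeasurableSpace.comap_comp]
    unfold MeasurableSpace.pi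
    rw [MeasurableSpace.comap_iSup]
    refine iSup_le fun n => ?_
    rw [MeasurableSpace.comap_comp]
    rintro _ ⟨s, -, rfl⟩
    exact MeasurableSpace.measurableSet_generateFrom ⟨n, {v | v i ∈ s}, rfl⟩
  · refine MeasurableSpace.generateFrom_le ?_
    rintro _ ⟨n, s, rfl⟩
    exact S.measurableSet_cyl d n s

/-- The `n`-box with vector of level indices `v`. -/
def box (n : ℕ) (v : Fin d → ℕ) : Set (S.Xd d) := {y | ∀ i, y i ∈ S.toNFCseq.level n (v i)}

/-- The vectors `v` of level indices of tower `n` whose box is contained in the cylinder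
of `s`. -/
def boxIdx (n : ℕ) (s : Set (Fin d → Option ℕ)) : Finset (Fin d → ℕ) :=
  (Fintype.piFinset fun _ => Finset.range (S.toNFCseq.hgt n)).filter
    fun v => (fun i => some (v i)) ∈ s

lemma isNBox_box {n : ℕ} {s : Set (Fin d → Option ℕ)} {v : Fin d → ℕ} (hv : v ∈ S.boxIdx d n s) :
    S.IsNBox d n (S.box d n v) := by
  refine ⟨v, fun i => ?_, rfl⟩
  have := (Finset.mem_filter.1 hv).1
  exact Finset.mem_range.1 (Fintype.mem_piFinset.1 this i)

lemma measure_cyl_eq_sum (ν : Measure (S.Xd d)) (n : ℕ) (s : Set (Fin d → Option ℕ))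
    (h : S.cyl d n s ⊆ S.towerD d n) :
    ν (S.cyl d n s) = ∑ v ∈ S.boxIdx d n s, ν (S.box d n v) := by
  have hU : S.cyl d n s = ⋃ v ∈ S.boxIdx d n s, S.box d n v := by
    ext y
    simp only [mem_iUnion, exists_prop]
    constructor
    · intro hy
      choose v hv using fun i => Option.ne_none_iff_exists'.1 (h hy i)
      refine ⟨v, Finset.mem_filter.2 ⟨?_, ?_⟩, hv⟩
      · exact Fintype.mem_piFinset.2 fun i => Finset.mem_range.2 (S.lt_hgt (hv i))
      · simpa only [cyl, mem_ofPred_eq, hv] using hy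
    · rintro ⟨v, hv, hy⟩
      have hy' : ∀ i, (y i).1 n = some (v i) := hy
      simpa only [cyl, mem_ofPred_eq, hy'] using (Finset.mem_filter.1 hv).2
  rw [hU]
  refine measure_biUnion_finset ?_ fun v _ => ?_
  · intro v _ w _ hvw
    refine Set.disjoint_left.2 fun y hy hy' => hvw (funext fun i => ?_)
    exact Option.some.inj ((hy i).symm.trans (hy' i))
  · have : S.box d n v = S.cyl d n {fun i => some (v i)} := by
      ext y
      exact funext_iff.symm
    rw [this]
    exact S.measurableSet_cyl d n _

/-! ### Convergence of ratios and comparison of the limits -/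

variable {S d} {σk : ℕ → Measure (S.Xd d)} {σ : Measure (S.Xd d)}

lemma tendsto_cyl_div (hc : S.RTendsto d σk σ) {n : ℕ} (hn : 0 < σ (S.towerD d n))
    {s : Set (Fin d → Option ℕ)} (hs : S.cyl d n s ⊆ S.towerD d n) :
    Tendsto (fun k => σk k (S.cyl d n s) / σk k (S.towerD d n)) atTop
      (𝓝 (σ (S.cyl d n s) / σ (S.towerD d n))) := by
  simp only [S.measure_cyl_eq_sum d _ n s hs, div_eq_mul_inv, Finset.sum_mul]
  refine tendsto_finsetSum _ fun v hv => ?_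
  simpa only [div_eq_mul_inv] using (hc n hn).2 _ (S.isNBox_box d hv)

/-- Convergence of ratios for cylinders of stage `m ≥ n`, normalized in `C_n^d`. -/
lemma tendsto_cyl_div_of_le (hc : S.RTendsto d σk σ) (hRk : ∀ k, S.IsRadon d (σk k))
    (hR : S.IsRadon d σ) {n m : ℕ} (hnm : n ≤ m) (hn : 0 < σ (S.towerD d n))
    {s : Set (Fin d → Option ℕ)} (hs : S.cyl d m s ⊆ S.towerD d n) :
    Tendsto (fun k => σk k (S.cyl d m s) / σk k (S.towerD d n)) atTop
      (𝓝 (σ (S.cyl d m s) / σ (S.towerD d n))) := by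
  have hm : 0 < σ (S.towerD d m) := hn.trans_le (measure_mono (S.towerD_mono d hnm))
  obtain ⟨t, ht⟩ := S.cyl_lift d hnm {v | ∀ i, v i ≠ none}
  rw [← towerD_eq_cyl] at ht
  have h1 := tendsto_cyl_div hc hm (hs.trans (S.towerD_mono d hnm))
  have h2 := tendsto_cyl_div hc hm (ht ▸ S.towerD_mono d hnm : S.cyl d m t ⊆ _)
  rw [← ht] at h2
  have hne : σ (S.towerD d n) / σ (S.towerD d m) ≠ 0 :=
    (ENNReal.div_pos hn.ne' (hR m).ne).ne'
  have hnt : σ (S.towerD d n) / σ (S.towerD d m) ≠ ⊤ :=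
    ENNReal.div_ne_top (hR n).ne hm.ne'
  have h3 := ENNReal.Tendsto.div h1 (Or.inr hne) h2 (Or.inl hnt)
  -- the normalizations in `C_m^d` cancel
  have key : ∀ a b c : ℝ≥0∞, c ≠ 0 → c ≠ ⊤ → a / c / (b / c) = a / b := by
    intro a b c h0 ht
    rw [div_eq_mul_inv a c, div_eq_mul_inv b c, mul_comm a, mul_comm b]
    exact ENNReal.mul_div_mul_left _ _ (ENNReal.inv_ne_zero.2 ht) (ENNReal.inv_ne_top.2 h0)
  rw [key _ _ _ hm.ne' (hR m).ne] at h3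
  refine h3.congr' ?_
  filter_upwards [(hc m hm).1] with k hk
  exact key _ _ _ hk.ne' (hRk k m).ne

/-- A comparison of two measures on the cylinders inside `C_n^d` makes `σ`-null sets `γ`-null
inside `C_n^d`. -/
lemma measure_inter_eq_zero_of_cyl_le {γ : Measure (S.Xd d)} (hRσ : S.IsRadon d σ)
    (hRγ : S.IsRadon d γ) {n : ℕ} {K : ℝ≥0∞} (hK : K ≠ ⊤)
    (h : ∀ m, n ≤ m → ∀ s, S.cyl d m s ⊆ S.towerD d n →
      γ (S.cyl d m s) ≤ K * σ (S.cyl d m s))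
    {A : Set (S.Xd d)} (hA : MeasurableSet A) (hA0 : σ A = 0) :
    γ (A ∩ S.towerD d n) = 0 := by
  set C := S.towerD d n with hC
  have hCm : MeasurableSet C := by
    rw [hC, towerD_eq_cyl]
    exact S.measurableSet_cyl d n _
  have : IsFiniteMeasure ((γ + σ).restrict C) :=
    ⟨by simpa using ⟨hRγ n, hRσ n⟩⟩
  have hdense := Measure.MeasureDense.of_generateFrom_isSetAlgebra_finite
    (μ := (γ + σ).restrict C) (S.isSetAlgebra_cyls d) (S.pi_eq_generateFrom_cyls d)
  have hbound : ∀ ε : ℝ, 0 < ε → γ (A ∩ C) ≤ (K + 1) * ENNReal.ofReal ε := by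
    intro ε hε
    obtain ⟨B, hB, hlt⟩ := hdense.approx A hA (measure_ne_top _ _) ε hε
    have hsub := hlt.le
    rw [Measure.restrict_apply' hCm, Measure.add_apply] at hsub
    have hγ1 : γ (symmDiff A B ∩ C) ≤ ENNReal.ofReal ε := le_self_add.trans hsub
    have hσ1 : σ (symmDiff A B ∩ C) ≤ ENNReal.ofReal ε := le_add_self.trans hsub
    have hBC : γ (B ∩ C) ≤ K * σ (B ∩ C) := by
      obtain ⟨p, s, rfl⟩ := hB
      obtain ⟨s', hs'⟩ := S.cyl_lift d (le_max_left p n) s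
      obtain ⟨t', ht'⟩ := S.cyl_lift d (le_max_right p n) {v | ∀ i, v i ≠ none}
      rw [← towerD_eq_cyl] at ht'
      have : S.cyl d p s ∩ C = S.cyl d (max p n) (s' ∩ t') := by
        rw [hs', hC, ht']; rfl
      rw [this]
      exact h _ (le_max_right p n) _ (this ▸ inter_subset_right)
    have hσB : σ (B ∩ C) ≤ ENNReal.ofReal ε := by
      calc σ (B ∩ C) ≤ σ (A ∪ symmDiff A B ∩ C) := by
            refine measure_mono fun y hy => ?_
            by_cases hyA : y ∈ A
            · exact Or.inl hyA
            · exact Or.inr ⟨Or.inr ⟨hy.1, hyA⟩, hy.2⟩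
        _ ≤ σ A + σ (symmDiff A B ∩ C) := measure_union_le _ _
        _ ≤ ENNReal.ofReal ε := by rw [hA0, zero_add]; exact hσ1
    calc γ (A ∩ C) ≤ γ (B ∩ C ∪ symmDiff A B ∩ C) := by
          refine measure_mono fun y hy => ?_
          by_cases hyB : y ∈ B
          · exact Or.inl ⟨hyB, hy.2⟩
          · exact Or.inr ⟨Or.inl ⟨hy.1, hyB⟩, hy.2⟩
      _ ≤ γ (B ∩ C) + γ (symmDiff A B ∩ C) := measure_union_le _ _
      _ ≤ K * ENNReal.ofReal ε + ENNReal.ofReal ε :=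
          add_le_add (hBC.trans (by gcongr)) hγ1
      _ = (K + 1) * ENNReal.ofReal ε := by rw [add_mul, one_mul]
  have hlim : Tendsto (fun ε : ℝ => (K + 1) * ENNReal.ofReal ε) (𝓝[>] 0) (𝓝 0) := by
    have h0 : Tendsto (fun ε : ℝ => ENNReal.ofReal ε) (𝓝[>] 0) (𝓝 0) := by
      have := (ENNReal.continuous_ofReal.tendsto 0).mono_left
        (nhdsWithin_le_nhds (s := Ioi (0 : ℝ)))
      simpa using this
    simpa using ENNReal.Tendsto.const_mul (a := K + 1) h0 (Or.inr (by finiteness))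
  exact le_antisymm (ge_of_tendsto hlim (eventually_mem_nhdsWithin.mono hbound)) zero_le

lemma exists_towerD_pos {ν : Measure (S.Xd d)} (h : ν ≠ 0) : ∃ n, 0 < ν (S.towerD d n) := by
  by_contra! hcon
  refine h (Measure.measure_univ_eq_zero.1 ?_)
  rw [← S.iUnion_towerD d]
  exact measure_iUnion_null fun n => le_antisymm (hcon n) zero_le

end NFC

/-- If `σ_k → σ`, `γ_k → γ` (nonzero Radon limits), `γ_k ≤ σ_k`, and for
each `n ≥ n̲` one has `γ_k(C_n^d) ≥ θ σ_k(C_n^d)` for all large `k`, then `γ ≪ σ`. -/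
theorem stmt9 (S : NFC) (d : ℕ) (hd : 1 ≤ d)
    (σk γk : ℕ → Measure (S.Xd d)) (σ γ : Measure (S.Xd d))
    (hRσk : ∀ k, S.IsRadon d (σk k)) (hRγk : ∀ k, S.IsRadon d (γk k))
    (hσ0 : σ ≠ 0) (hγ0 : γ ≠ 0) (hRσ : S.IsRadon d σ) (hRγ : S.IsRadon d γ)
    (n0 : ℕ) (hn0 : 1 ≤ n0) (θ : ℝ) (hθ : 0 < θ)
    (hconvσ : S.RTendsto d σk σ) (hconvγ : S.RTendsto d γk γ)
    (hle : ∀ k, γk k ≤ σk k)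
    (hθk : ∀ n : ℕ, n0 ≤ n → ∀ᶠ k in atTop,
      ENNReal.ofReal θ * σk k (S.towerD d n) ≤ γk k (S.towerD d n)) :
    γ ≪ σ := by
  obtain ⟨a, ha⟩ := NFC.exists_towerD_pos hσ0
  obtain ⟨b, hb⟩ := NFC.exists_towerD_pos hγ0
  have hθ0 : ENNReal.ofReal θ ≠ 0 := (ENNReal.ofReal_pos.2 hθ).ne'
  refine Measure.AbsolutelyContinuous.mk fun A hA hA0 => ?_
  set N := max n0 (max a b)
  have hcover : A = ⋃ p, A ∩ S.towerD d (N + p) := by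
    rw [← inter_iUnion]
    refine (inter_eq_left.2 fun y _ => ?_).symm
    obtain ⟨p, hp⟩ := mem_iUnion.1 ((S.iUnion_towerD d).symm ▸ mem_univ y)
    exact mem_iUnion.2 ⟨p, S.towerD_mono d (by omega) hp⟩
  rw [hcover]
  refine measure_iUnion_null fun p => ?_
  set n := N + p
  have hσn : 0 < σ (S.towerD d n) :=
    ha.trans_le (measure_mono (S.towerD_mono d (by omega)))
  have hγn : 0 < γ (S.towerD d n) :=
    hb.trans_le (measure_mono (S.towerD_mono d (by omega)))
  -- the limit of the inequality between ratios, with the denominators cleared, has this constant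
  set K : ℝ≥0∞ := (ENNReal.ofReal θ)⁻¹ * (σ (S.towerD d n))⁻¹ * γ (S.towerD d n) with hKdef
  have hK : K ≠ ⊤ := ENNReal.mul_ne_top
    (ENNReal.mul_ne_top (ENNReal.inv_ne_top.2 hθ0) (ENNReal.inv_ne_top.2 hσn.ne')) (hRγ n).ne
  refine NFC.measure_inter_eq_zero_of_cyl_le hRσ hRγ hK (fun m hm s hs => ?_) hA hA0
  have h1 := NFC.tendsto_cyl_div_of_le hconvγ hRγk hRγ hm hγn hs
  have h2 := ENNReal.Tendsto.const_mul (a := (ENNReal.ofReal θ)⁻¹)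
    (NFC.tendsto_cyl_div_of_le hconvσ hRσk hRσ hm hσn hs) (Or.inr (ENNReal.inv_ne_top.2 hθ0))
  have hlim := le_of_tendsto_of_tendsto h1 h2 (by
    filter_upwards [hθk n (by omega)] with k hk
    calc γk k (S.cyl d m s) / γk k (S.towerD d n)
        ≤ σk k (S.cyl d m s) / (ENNReal.ofReal θ * σk k (S.towerD d n)) :=
          ENNReal.div_le_div (hle k _) hk
      _ = (ENNReal.ofReal θ)⁻¹ * (σk k (S.cyl d m s) / σk k (S.towerD d n)) := by
          rw [div_eq_mul_inv, div_eq_mul_inv,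
            ENNReal.mul_inv (Or.inl hθ0) (Or.inl ENNReal.ofReal_ne_top)]
          ring)
  rw [ENNReal.div_le_iff hγn.ne' (hRγ n).ne] at hlim
  refine hlim.trans_eq ?_
  rw [hKdef, div_eq_mul_inv]
  ring
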